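/- Let H be a real l × n matrix, h ∈ ℝˡ, b, c ∈ ℝⁿ, and α > 0. Suppose Z = { z ∈ ℝⁿ : H z ≥ h } is nonempty and bounded. Define g(v) = sInf { ‖v − α z − b‖ : z ∈ Z } (Euclidean norm), F = { y ∈ ℝⁿ : g(y) ≤ 0 }, and the predictability loss ℓᵖ(x) = sInf { ‖γ‖ : γ ∈ ℝⁿ, g(x+γ) ≤ 0, ⟨c, x+γ⟩ ≤ sInf { ⟨c, y⟩ : y ∈ F } }. Then for every x ∈ ℝⁿ, ℓᵖ(x) = sInf { ‖γ‖ : γ ∈ ℝⁿ, ∃ ζ ∈ ℝⁿ, ∃ λ ∈ ℝˡ, x + γ = ζ + b, H ζ ≥ α h, λ ≥ 0, Hᵀλ = α c, ⟨c, x + γ − b⟩ ≤ ⟨λ, h⟩ }, where the right-hand side is the feasible-value set of a convex program in (γ, ζ, λ). -/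

import Mathlib

open RealInnerProductSpace Matrix

/-!
The two value sets coincide point by point in `γ`.

Since `Z` is compact, the infimum defining `g` is attained, so `g y ≤ 0` holds exactly when
`y = α z + b` for some `z ∈ Z`; with `ζ = α z` this is the primal feasibility part of the convex
program. Optimality of `x + γ` over `F = α Z + b` says that `⟪c, x + γ - b⟫` is a lower bound of
`z ↦ α ⟪c, z⟫` on `Z`. By linear programming duality (`lp_lower_bound_certificate`) such a bound is
certified by some `λ ≥ 0` with `Hᵀ λ = α c` and `⟪c, x + γ - b⟫ ≤ ⟪λ, h⟫`; conversely any such `λ`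
certifies the bound by weak duality.

Strong duality is obtained from Farkas' lemma for finitely many linear functionals
(`farkas_functionals`), proved by induction on their number and applied to the homogenization of
`H z ≥ h`.
-/

/-- **Farkas' lemma**: a functional that is nonnegative wherever finitely many functionals `a i` are
all nonnegative is a conic combination of them. -/
lemma farkas_functionals {V : Type*} [AddCommGroup V] [Module ℝ V] (m : ℕ) :
    ∀ (a : Fin m → V →ₗ[ℝ] ℝ) (c : V →ₗ[ℝ] ℝ),
      (∀ x, (∀ i, 0 ≤ a i x) → 0 ≤ c x) →
      ∃ μ : Fin m → ℝ, (∀ i, 0 ≤ μ i) ∧ ∀ x, c x = ∑ i, μ i * a i x := by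
  induction m with
  | zero =>
    intro a c hc
    refine ⟨fun _ => 0, fun _ => le_rfl, fun x => ?_⟩
    have h1 := hc x (fun i => i.elim0)
    have h2 := hc (-x) (fun i => i.elim0)
    rw [map_neg] at h2
    simp only [Finset.univ_eq_empty, Finset.sum_empty]
    linarith
  | succ m ih =>
    intro a c hc
    by_cases hcase : ∀ x, (∀ i : Fin m, 0 ≤ a i.succ x) → 0 ≤ c x
    · obtain ⟨μ, hμ, hsum⟩ := ih (fun i => a i.succ) c hcase
      refine ⟨Fin.cons 0 μ, fun i => ?_, fun x => ?_⟩
      · refine Fin.cases ?_ (fun j => ?_) i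
        · simp
        · simpa using hμ j
      · simp [Fin.sum_univ_succ, hsum x]
    · push Not at hcase
      obtain ⟨x₀, hx₀, hcx₀⟩ := hcase
      have hb : a 0 x₀ < 0 := by
        by_contra hb
        push Not at hb
        exact absurd (hc x₀ (Fin.cases hb hx₀)) (not_le.mpr hcx₀)
      -- The induction hypothesis applies to the functionals precomposed with the projection
      -- `x ↦ x - (a 0 x / a 0 x₀) • x₀` onto the kernel of `a 0`.
      obtain ⟨μ, hμ, hsum⟩ := ih (fun i => a i.succ - (a i.succ x₀ / a 0 x₀) • a 0)
        (c - (c x₀ / a 0 x₀) • a 0) (by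
          intro x hx
          have key := hc (x - (a 0 x / a 0 x₀) • x₀) (by
            refine Fin.cases ?_ (fun i => ?_)
            · have : a 0 (x - (a 0 x / a 0 x₀) • x₀) = 0 := by
                simp only [map_sub, map_smul, smul_eq_mul]
                field_simp [hb.ne]
                ring
              exact this.ge
            · have h1 := hx i
              simp only [LinearMap.sub_apply, LinearMap.smul_apply, smul_eq_mul] at h1
              simp only [map_sub, map_smul, smul_eq_mul]
              calc (0 : ℝ) ≤ _ := h1
                _ = _ := by ring)
          simp only [map_sub, map_smul, smul_eq_mul] at key
          simp only [LinearMap.sub_apply, LinearMap.smul_apply, smul_eq_mul]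
          calc (0 : ℝ) ≤ _ := key
            _ = _ := by ring)
      refine ⟨Fin.cons (c x₀ / a 0 x₀ + ∑ i, μ i * (-(a i.succ x₀ / a 0 x₀))) μ,
        fun i => ?_, fun x => ?_⟩
      · refine Fin.cases ?_ (fun j => ?_) i
        · rw [Fin.cons_zero]
          refine add_nonneg (div_nonneg_of_nonpos hcx₀.le hb.le)
            (Finset.sum_nonneg fun j _ => mul_nonneg (hμ j) ?_)
          exact neg_nonneg.mpr (div_nonpos_of_nonneg_of_nonpos (hx₀ j) hb.le)
        · simpa using hμ j
      · have h1 := hsum x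
        simp only [LinearMap.sub_apply, LinearMap.smul_apply, smul_eq_mul] at h1
        rw [Fin.sum_univ_succ]
        simp only [Fin.cons_zero, Fin.cons_succ]
        have h2 : ∑ i, μ i * (a i.succ x - a i.succ x₀ / a 0 x₀ * a 0 x)
            = ∑ i, μ i * a i.succ x + (∑ i, μ i * (-(a i.succ x₀ / a 0 x₀))) * a 0 x := by
          rw [Finset.sum_mul, ← Finset.sum_add_distrib]
          exact Finset.sum_congr rfl fun i _ => by ring
        rw [h2] at h1
        linarith

/-- Strong linear programming duality in certificate form: every lower bound `w` of `c ⬝ᵥ z` over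
the nonempty polyhedron `H z ≥ h` is dominated by the value of a dual feasible point. -/
lemma lp_lower_bound_certificate {l n : ℕ} (H : Matrix (Fin l) (Fin n) ℝ) (h : Fin l → ℝ)
    (c : Fin n → ℝ) (w : ℝ) (z₀ : Fin n → ℝ) (hz₀ : ∀ i, h i ≤ (H *ᵥ z₀) i)
    (hw : ∀ z : Fin n → ℝ, (∀ i, h i ≤ (H *ᵥ z) i) → w ≤ c ⬝ᵥ z) :
    ∃ μ : Fin l → ℝ, (∀ i, 0 ≤ μ i) ∧ Hᵀ *ᵥ μ = c ∧ w ≤ μ ⬝ᵥ h := by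
  -- Homogenization on pairs `(z, t)`: the constraints `t ≥ 0` and `(H z) i - t * h i ≥ 0`.
  let fs : (Fin n → ℝ) × ℝ →ₗ[ℝ] (Fin n → ℝ) := LinearMap.fst ℝ _ _
  let sn : (Fin n → ℝ) × ℝ →ₗ[ℝ] ℝ := LinearMap.snd ℝ _ _
  let a : Fin (l + 1) → (Fin n → ℝ) × ℝ →ₗ[ℝ] ℝ :=
    Fin.cons sn (fun i => (LinearMap.proj i ∘ₗ H.mulVecLin ∘ₗ fs) - h i • sn)
  let C : (Fin n → ℝ) × ℝ →ₗ[ℝ] ℝ := (dotProductBilin ℝ ℝ c ∘ₗ fs) - w • sn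
  have ha0 : ∀ z t, a 0 (z, t) = t := fun z t => rfl
  have has : ∀ i z t, a (Fin.succ i) (z, t) = (H *ᵥ z) i - h i * t := fun i z t => rfl
  have hC : ∀ z t, C (z, t) = c ⬝ᵥ z - w * t := fun z t => rfl
  obtain ⟨μ, hμ, hsum⟩ := farkas_functionals (l + 1) a C (by
    rintro ⟨z, t⟩ hzt
    have ht := hzt 0
    rw [ha0] at ht
    have hz : ∀ i, h i * t ≤ (H *ᵥ z) i := fun i => by
      have := hzt i.succ
      rw [has] at this
      linarith
    rw [hC]
    rcases ht.eq_or_lt with rfl | ht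
    -- At `t = 0` the vector `z` is a recession direction, along which `c` cannot decrease.
    · by_contra hneg
      push Not at hneg
      simp only [mul_zero, sub_zero] at hneg hz
      have hs : ∀ s : ℝ, 0 ≤ s → w ≤ c ⬝ᵥ z₀ + s * (c ⬝ᵥ z) := fun s hs => by
        have := hw (z₀ + s • z) (fun i => by
          rw [mulVec_add, mulVec_smul]
          simp only [Pi.add_apply, Pi.smul_apply, smul_eq_mul]
          have := mul_nonneg hs (hz i)
          linarith [hz₀ i])
        simpa [dotProduct_add, dotProduct_smul] using this
      have h0 := hw z₀ hz₀
      have h1 := hs ((c ⬝ᵥ z₀ - w + 1) / (-(c ⬝ᵥ z)))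
        (div_nonneg (by linarith) (by linarith))
      have h2 : (c ⬝ᵥ z₀ - w + 1) / (-(c ⬝ᵥ z)) * (c ⬝ᵥ z) = -(c ⬝ᵥ z₀ - w + 1) := by
        rw [div_neg, neg_mul, div_mul_cancel₀ _ hneg.ne]
      linarith
    · have := hw (t⁻¹ • z) (fun i => by
        rw [mulVec_smul]
        simp only [Pi.smul_apply, smul_eq_mul]
        rw [inv_mul_eq_div, le_div_iff₀ ht]
        exact hz i)
      rw [dotProduct_smul, smul_eq_mul, inv_mul_eq_div, le_div_iff₀ ht] at this
      linarith)
  have hsum' : ∀ z t, c ⬝ᵥ z - w * t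
      = μ 0 * t + ∑ i : Fin l, μ i.succ * ((H *ᵥ z) i - h i * t) := fun z t => by
    have := hsum (z, t)
    rw [hC, Fin.sum_univ_succ, ha0] at this
    simpa only [has] using this
  refine ⟨fun i => μ i.succ, fun i => hμ _, ?_, ?_⟩
  · refine dotProduct_eq _ _ fun z => ?_
    have h1 := hsum' z 0
    simp only [mul_zero, sub_zero, zero_add] at h1
    rw [h1, mulVec_transpose, ← dotProduct_mulVec]
    rfl
  · have h1 := hsum' 0 1
    simp only [dotProduct_zero, mulVec_zero, Pi.zero_apply, mul_one, zero_sub, mul_neg,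
      Finset.sum_neg_distrib] at h1
    have h2 := hμ 0
    simp only [dotProduct]
    linarith

/-- **Convex reformulation of the predictability loss (scaling-and-translation class).**
With primitive set `Z = { z : H z ≥ h }` nonempty and bounded, `α > 0`, constraint
function `g v = inf { ‖v − α z − b‖ : z ∈ Z }`, feasible set `F = { y : g y ≤ 0 }`
and recovered objective `⟪c, ·⟫`, the predictability loss equals the optimal value of
the convex program in `(γ, ζ, λ)` obtained by the substitution `ζ = α z`. -/
theorem predictability_loss_convex_reformulation
    (l n : ℕ) (H : Matrix (Fin l) (Fin n) ℝ) (h : EuclideanSpace ℝ (Fin l))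
    (b c : EuclideanSpace ℝ (Fin n)) (α : ℝ) (hα : 0 < α)
    (Z : Set (EuclideanSpace ℝ (Fin n)))
    (hZ : Z = {z : EuclideanSpace ℝ (Fin n) | ∀ i, h i ≤ H.mulVec z i})
    (hZne : Z.Nonempty) (hZbdd : Bornology.IsBounded Z)
    (g : EuclideanSpace ℝ (Fin n) → ℝ)
    (hg : ∀ v, g v = sInf {r : ℝ | ∃ z ∈ Z, r = ‖v - α • z - b‖})
    (F : Set (EuclideanSpace ℝ (Fin n))) (hF : F = {y | g y ≤ 0})
    (ℓp : EuclideanSpace ℝ (Fin n) → ℝ)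
    (hℓp : ∀ x, ℓp x = sInf {r : ℝ | ∃ γ : EuclideanSpace ℝ (Fin n),
      r = ‖γ‖ ∧ g (x + γ) ≤ 0 ∧
      ⟪c, x + γ⟫ ≤ sInf {r' : ℝ | ∃ y ∈ F, r' = ⟪c, y⟫}}) :
    ∀ x : EuclideanSpace ℝ (Fin n),
      ℓp x = sInf {r : ℝ | ∃ γ : EuclideanSpace ℝ (Fin n),
        r = ‖γ‖ ∧ ∃ ζ : EuclideanSpace ℝ (Fin n), ∃ lam : EuclideanSpace ℝ (Fin l),
          x + γ = ζ + b ∧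
          (∀ i, α * h i ≤ H.mulVec ζ i) ∧
          (∀ i, 0 ≤ lam i) ∧
          (Hᵀ.mulVec lam = fun i => α * c i) ∧
          ⟪c, x + γ - b⟫ ≤ ⟪lam, h⟫} := by
  have hmem : ∀ z, z ∈ Z ↔ ∀ i, h i ≤ H.mulVec z i := fun z => by rw [hZ]; rfl
  have hZclosed : IsClosed Z := by
    rw [hZ, Set.ofPred_forall]
    refine isClosed_iInter fun i => isClosed_le continuous_const ?_
    simp only [mulVec, dotProduct]
    fun_prop
  have hZcomp : IsCompact Z := Metric.isCompact_of_isClosed_isBounded hZclosed hZbdd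
  have hg0 : ∀ y, g y ≤ 0 ↔ ∃ z ∈ Z, y = α • z + b := by
    intro y
    rw [hg]
    constructor
    · intro hy
      obtain ⟨z, hz, hmin⟩ := hZcomp.exists_isMinOn hZne
        (f := fun z => ‖y - α • z - b‖) (by fun_prop)
      refine ⟨z, hz, ?_⟩
      have h1 : ‖y - α • z - b‖ ≤ sInf {r : ℝ | ∃ z ∈ Z, r = ‖y - α • z - b‖} := by
        refine le_csInf ⟨_, z, hz, rfl⟩ ?_
        rintro r ⟨z', hz', rfl⟩
        exact hmin hz'
      have h2 : y - α • z - b = 0 := norm_le_zero_iff.mp (h1.trans hy)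
      rw [sub_sub, sub_eq_zero] at h2
      exact h2
    · rintro ⟨z, hz, rfl⟩
      refine csInf_le ⟨0, ?_⟩ ⟨z, hz, by simp⟩
      rintro r ⟨z', _, rfl⟩
      exact norm_nonneg _
  have hFmem : ∀ y, y ∈ F ↔ ∃ z ∈ Z, y = α • z + b := fun y => by rw [hF]; exact hg0 y
  have hset : {r' : ℝ | ∃ y ∈ F, r' = ⟪c, y⟫} = (fun z => ⟪c, α • z + b⟫) '' Z := by
    ext r
    constructor
    · rintro ⟨y, hy, rfl⟩
      obtain ⟨z, hz, rfl⟩ := (hFmem y).1 hy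
      exact ⟨z, hz, rfl⟩
    · rintro ⟨z, hz, rfl⟩
      exact ⟨_, (hFmem _).2 ⟨z, hz, rfl⟩, rfl⟩
  have hbdd : BddBelow ((fun z => ⟪c, α • z + b⟫) '' Z) :=
    (hZcomp.image (by fun_prop)).bddBelow
  have hopt : ∀ y, ⟪c, y⟫ ≤ sInf {r' : ℝ | ∃ y ∈ F, r' = ⟪c, y⟫} ↔
      ∀ z ∈ Z, ⟪c, y - b⟫ ≤ α * ⟪c, z⟫ := by
    intro y
    rw [hset, le_csInf_iff hbdd (hZne.image _), Set.forall_mem_image]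
    refine forall₂_congr fun z _ => ?_
    rw [inner_add_right, inner_sub_right, inner_smul_right, sub_le_iff_le_add]
  have hdot : ∀ {k : ℕ} (u v : EuclideanSpace ℝ (Fin k)), ⟪u, v⟫ = u.ofLp ⬝ᵥ v.ofLp := by
    intro k u v
    rw [EuclideanSpace.inner_eq_star_dotProduct, star_trivial, dotProduct_comm]
  intro x
  rw [hℓp]
  congr 1
  ext r
  refine exists_congr fun γ => and_congr_right fun _ => ?_
  rw [hg0, hopt]
  constructor
  · rintro ⟨⟨z, hz, hxz⟩, hle⟩
    obtain ⟨μ, hμ, hμc, hμh⟩ := lp_lower_bound_certificate H h.ofLp c.ofLp (⟪c, x + γ - b⟫ / α)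
      z.ofLp ((hmem z).1 hz) (fun z' hz' => by
        have := hle (WithLp.toLp 2 z') ((hmem _).2 hz')
        rw [hdot c (WithLp.toLp 2 z')] at this
        rw [div_le_iff₀ hα, mul_comm]
        exact this)
    refine ⟨α • z, WithLp.toLp 2 (α • μ), hxz, fun i => ?_, fun i => ?_, ?_, ?_⟩
    · rw [WithLp.ofLp_smul, mulVec_smul]
      exact mul_le_mul_of_nonneg_left ((hmem z).1 hz i) hα.le
    · exact mul_nonneg hα.le (hμ i)
    · change Hᵀ *ᵥ (α • μ) = _
      rw [mulVec_smul, hμc]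
      rfl
    · rw [hdot (WithLp.toLp 2 (α • μ)) h, smul_dotProduct, smul_eq_mul]
      rwa [div_le_iff₀ hα, mul_comm] at hμh
  · rintro ⟨ζ, lam, hxζ, hζ, hlam, hlamc, hle⟩
    refine ⟨⟨α⁻¹ • ζ, (hmem _).2 fun i => ?_, ?_⟩, fun z hz => hle.trans ?_⟩
    · rw [WithLp.ofLp_smul, mulVec_smul, Pi.smul_apply, smul_eq_mul, inv_mul_eq_div,
        le_div_iff₀ hα, mul_comm]
      exact hζ i
    · rw [smul_inv_smul₀ hα.ne', hxζ]
    -- Weak duality.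
    · have hlamc' : Hᵀ *ᵥ lam.ofLp = α • c.ofLp := hlamc
      calc ⟪lam, h⟫ = lam.ofLp ⬝ᵥ h.ofLp := hdot _ _
        _ ≤ lam.ofLp ⬝ᵥ (H *ᵥ z.ofLp) :=
          Finset.sum_le_sum fun i _ => mul_le_mul_of_nonneg_left ((hmem z).1 hz i) (hlam i)
        _ = α * ⟪c, z⟫ := by
          rw [dotProduct_mulVec, ← mulVec_transpose, hlamc', smul_dotProduct, smul_eq_mul, hdot]
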